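/- Let d = 3, δ ∈ (1,2), λ > 0 with δλ ∈ (0,2), and let z > 0. Then the improper radial Fourier transform \widehat{D}_3(z) := (1/(2π² z)) · lim_{T→∞} ∫₀^T r sin(z r) D_{λ,δ}(r) dr exists and equals −(1/(2π² z)) · Im ∫₀^∞ e^{−z t} · t · ( 1 − e^{iπδλ/2} t^{δλ} / (1 + e^{iπδ/2} t^{δ})^{λ} ) dt. (This is the case d = 3 of the Bessel-K representation of the Dagum isotropic spectral density, where K_{1/2}(x) = √(π/(2x)) e^{−x} reduces the kernel to an exponential.) -/

import Mathlib

open MeasureTheory Set Filter intervalIntegral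

/-- The Dagum function with parameters `lam > 0`, `δ > 0`:
`D_{λ,δ}(r) = 1 - (r^δ/(1+r^δ))^λ`. -/
noncomputable def dagum (lam δ r : ℝ) : ℝ := 1 - (r ^ δ / (1 + r ^ δ)) ^ lam

/-- The Dagum integrand rotated to the positive imaginary axis:
`1 - e^{iπδλ/2} t^{δλ} / (1 + e^{iπδ/2} t^δ)^λ`, principal branch powers. -/
noncomputable def dagumRot (lam δ : ℝ) (t : ℝ) : ℂ :=
  1 - Complex.exp (Complex.I * Real.pi * (δ * lam) / 2) * (t : ℂ) ^ ((δ * lam : ℝ) : ℂ) /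
      (1 + Complex.exp (Complex.I * Real.pi * δ / 2) * (t : ℂ) ^ ((δ : ℝ) : ℂ)) ^ ((lam : ℝ) : ℂ)

/-- The holomorphic extension of the Dagum function to the closed first quadrant. -/
noncomputable def dagumF (lam δ : ℝ) (w : ℂ) : ℂ :=
  1 - w ^ ((δ * lam : ℝ) : ℂ) / (1 + w ^ (δ : ℂ)) ^ (lam : ℂ)

lemma quad_arg {w : ℂ} (h1 : 0 ≤ w.re) (h2 : 0 ≤ w.im) :
    0 ≤ w.arg ∧ w.arg ≤ Real.pi / 2 :=
  ⟨Complex.arg_nonneg_iff.2 h2, Complex.arg_le_pi_div_two_iff.2 (Or.inl h1)⟩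

lemma quad_arg_pow {δ : ℝ} (hδ1 : 1 < δ) (hδ2 : δ < 2) {w : ℂ} (hw : w ≠ 0)
    (h1 : 0 ≤ w.re) (h2 : 0 ≤ w.im) :
    0 ≤ (w ^ (δ : ℂ)).arg ∧ (w ^ (δ : ℂ)).arg < Real.pi := by
  obtain ⟨ha, hb⟩ := quad_arg h1 h2
  have hpi := Real.pi_pos
  have h3 : 0 ≤ w.arg * δ := by positivity
  have h4 : w.arg * δ < Real.pi := by nlinarith
  have him : (Complex.log w * (δ : ℂ)).im = w.arg * δ := by
    simp [Complex.mul_im, Complex.log_im]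
  have : (w ^ (δ : ℂ)).arg = w.arg * δ := by
    rw [Complex.cpow_def_of_ne_zero hw, ← Complex.log_im, Complex.log_exp, him]
    · rw [him]; linarith
    · rw [him]; linarith
  rw [this]; exact ⟨h3, h4⟩

lemma slit_one_add {u : ℂ} (h0 : 0 ≤ u.arg) (h1 : u.arg < Real.pi) :
    1 + u ∈ Complex.slitPlane := by
  rw [Complex.mem_slitPlane_iff]
  rw [Complex.arg_lt_pi_iff] at h1
  rcases h1 with h | h
  · left; simp; linarith
  · right; simpa using h

lemma quad_slit {δ : ℝ} (hδ1 : 1 < δ) (hδ2 : δ < 2) {w : ℂ}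
    (h1 : 0 ≤ w.re) (h2 : 0 ≤ w.im) : 1 + w ^ (δ : ℂ) ∈ Complex.slitPlane := by
  by_cases hw : w = 0
  · have : (δ : ℂ) ≠ 0 := by exact_mod_cast (by linarith : δ ≠ 0)
    simp [hw, this]
  · obtain ⟨a, b⟩ := quad_arg_pow hδ1 hδ2 hw h1 h2
    exact slit_one_add a b

lemma dagumF_eq {δ : ℝ} (lam : ℝ) (hδ1 : 1 < δ) (hδ2 : δ < 2) {w : ℂ} (hw : w ≠ 0)
    (h1 : 0 ≤ w.re) (h2 : 0 ≤ w.im) :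
    dagumF lam δ w = 1 - 1 / (1 + (w ^ (δ : ℂ))⁻¹) ^ (lam : ℂ) := by
  obtain ⟨ha, hb⟩ := quad_arg_pow hδ1 hδ2 hw h1 h2
  have hpi := Real.pi_pos
  obtain ⟨hc, hd⟩ := quad_arg h1 h2
  set u := w ^ (δ : ℂ) with hu
  have hu0 : u ≠ 0 := by rw [hu]; simp [Complex.cpow_eq_zero_iff, hw]
  have hs : 1 + u ∈ Complex.slitPlane := slit_one_add ha hb
  have hinv : (u⁻¹).arg = -u.arg := by rw [Complex.arg_inv, if_neg hb.ne]
  have him : (u⁻¹).im ≤ 0 := by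
    have := Complex.arg_nonneg_iff.1 ha
    rw [Complex.inv_im]
    exact div_nonpos_of_nonpos_of_nonneg (by linarith) (Complex.normSq_nonneg _)
  have hs2 : 1 + u⁻¹ ∈ Complex.slitPlane := by
    rw [Complex.mem_slitPlane_iff]
    rw [Complex.arg_lt_pi_iff] at hb
    rcases hb with h | h
    · left
      have : 0 ≤ (u⁻¹).re := by
        rw [Complex.inv_re]; exact div_nonneg h (Complex.normSq_nonneg _)
      simp only [Complex.add_re, Complex.one_re]; linarith
    · right
      simp [Complex.inv_im, h, hu0]
  have harg1 : (1 + u⁻¹).arg ≤ 0 := by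
    rcases him.lt_or_eq with h | h
    · exact (Complex.arg_neg_iff.2 (by simpa using h)).le
    · have := Complex.mem_slitPlane_iff.1 hs2
      have h' : (1 + u⁻¹).im = 0 := by simpa using h
      have hre : 0 < (1 + u⁻¹).re := by
        rcases this with h | h
        · exact h
        · exact absurd h' h
      rw [Complex.arg_eq_zero_iff.2 ⟨hre.le, h'⟩]
  have harg2 := Complex.neg_pi_lt_arg (1 + u⁻¹)
  have hs20 : 1 + u⁻¹ ≠ 0 := Complex.slitPlane_ne_zero hs2
  have hmul : 1 + u = u * (1 + u⁻¹) := by field_simp; ring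
  have hpow : (1 + u) ^ (lam : ℂ) = u ^ (lam : ℂ) * (1 + u⁻¹) ^ (lam : ℂ) := by
    rw [hmul, Complex.cpow_def_of_ne_zero (mul_ne_zero hu0 hs20),
      Complex.log_mul hu0 hs20 ⟨by linarith, by linarith⟩,
      Complex.cpow_def_of_ne_zero hu0, Complex.cpow_def_of_ne_zero hs20, ← Complex.exp_add, add_mul]
  have him2 : (Complex.log w * (δ : ℂ)).im = w.arg * δ := by
    simp [Complex.mul_im, Complex.log_im]
  have hpow2 : w ^ ((δ * lam : ℝ) : ℂ) = u ^ (lam : ℂ) := by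
    rw [hu, Complex.ofReal_mul, Complex.cpow_mul]
    · rw [him2]; nlinarith
    · rw [him2]; nlinarith
  have hne : u ^ (lam : ℂ) ≠ 0 := by simp [Complex.cpow_eq_zero_iff, hu0]
  have hne2 : (1 + u⁻¹) ^ (lam : ℂ) ≠ 0 := by simp [Complex.cpow_eq_zero_iff, hs20]
  unfold dagumF
  rw [← hu, hpow, hpow2]
  field_simp

lemma dagumF_bound {δ : ℝ} (lam : ℝ) (hδ1 : 1 < δ) (hδ2 : δ < 2) :
    ∃ C R : ℝ, 0 < C ∧ 1 ≤ R ∧ ∀ w : ℂ, 0 ≤ w.re → 0 ≤ w.im → R ≤ ‖w‖ →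
      ‖dagumF lam δ w‖ ≤ C * ‖w‖ ^ (-δ) := by
  have hd : DifferentiableAt ℂ (fun v : ℂ => 1 - 1 / (1 + v) ^ (lam : ℂ)) 0 := by
    refine DifferentiableAt.sub (by fun_prop) (DifferentiableAt.div (by fun_prop) ?_ (by simp))
    exact DifferentiableAt.cpow_const (by fun_prop) (by simp)
  have hO := hd.isBigO_sub
  obtain ⟨C, hC, hb⟩ := hO.exists_pos
  have hb := hb.bound
  obtain ⟨ε, hε, hball⟩ := Metric.eventually_nhds_iff.1 hb
  have ht : Tendsto (fun x : ℝ => x ^ (-δ)) atTop (nhds 0) :=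
    tendsto_rpow_neg_atTop (by linarith)
  obtain ⟨R, hR⟩ := eventually_atTop.1 ((ht.eventually (gt_mem_nhds hε)).and (eventually_ge_atTop 1))
  refine ⟨C, R, hC, (hR R le_rfl).2, fun w h1 h2 h3 => ?_⟩
  have hw1 := hR _ h3
  have hw : w ≠ 0 := by
    intro h; rw [h, norm_zero] at hw1; linarith [hw1.2]
  have hnorm : ‖(w ^ (δ : ℂ))⁻¹‖ = ‖w‖ ^ (-δ) := by
    rw [norm_inv, Complex.norm_cpow_real, Real.rpow_neg (norm_nonneg _)]
  have := @hball ((w ^ (δ : ℂ))⁻¹) (by rw [dist_zero_right, hnorm]; exact hw1.1)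
  rw [dagumF_eq lam hδ1 hδ2 hw h1 h2]
  simpa [hnorm] using this

lemma dagumF_cont {δ lam : ℝ} (hδ1 : 1 < δ) (hδ2 : δ < 2) (hdl0 : 0 < δ * lam) {w : ℂ}
    (h1 : 0 ≤ w.re) (h2 : 0 ≤ w.im) : ContinuousAt (dagumF lam δ) w := by
  unfold dagumF
  have hs := quad_slit hδ1 hδ2 h1 h2
  have c1 : ContinuousAt (fun x : ℂ => x ^ ((δ * lam : ℝ) : ℂ)) w :=
    Complex.continuousAt_cpow_const_of_re_pos (Or.inl h1) (by rwa [Complex.ofReal_re])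
  have c2 : ContinuousAt (fun x : ℂ => x ^ (δ : ℂ)) w :=
    Complex.continuousAt_cpow_const_of_re_pos (Or.inl h1) (by rw [Complex.ofReal_re]; linarith)
  have c3 : ContinuousAt (fun x : ℂ => (1 + x ^ (δ : ℂ)) ^ (lam : ℂ)) w :=
    ContinuousAt.cpow (continuousAt_const.add c2) continuousAt_const hs
  refine continuousAt_const.sub (c1.div c3 ?_)
  simp [Complex.cpow_eq_zero_iff, Complex.slitPlane_ne_zero hs]

lemma dagumF_diff {δ lam : ℝ} (hδ1 : 1 < δ) (hδ2 : δ < 2) {w : ℂ}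
    (h1 : 0 < w.re) (h2 : 0 < w.im) : DifferentiableAt ℂ (dagumF lam δ) w := by
  unfold dagumF
  have hs := quad_slit hδ1 hδ2 h1.le h2.le
  have hw : w ∈ Complex.slitPlane := Or.inl h1
  have c1 : DifferentiableAt ℂ (fun x : ℂ => x ^ ((δ * lam : ℝ) : ℂ)) w :=
    DifferentiableAt.cpow_const (by fun_prop) hw
  have c2 : DifferentiableAt ℂ (fun x : ℂ => x ^ (δ : ℂ)) w :=
    DifferentiableAt.cpow_const (by fun_prop) hw
  have c3 : DifferentiableAt ℂ (fun x : ℂ => (1 + x ^ (δ : ℂ)) ^ (lam : ℂ)) w :=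
    DifferentiableAt.cpow_const (c2.const_add 1) hs
  refine (differentiableAt_const _).sub (c1.div c3 ?_)
  simp [Complex.cpow_eq_zero_iff, Complex.slitPlane_ne_zero hs]

lemma dagumF_ofReal (lam δ : ℝ) {r : ℝ} (hr : 0 ≤ r) :
    dagumF lam δ (r : ℂ) = (dagum lam δ r : ℂ) := by
  have h1 : 0 ≤ r ^ δ := Real.rpow_nonneg hr _
  unfold dagumF dagum
  rw [Real.div_rpow h1 (by linarith), ← Real.rpow_mul hr, ← Complex.ofReal_cpow hr,
    ← Complex.ofReal_cpow hr, ← Complex.ofReal_one, ← Complex.ofReal_add,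
    ← Complex.ofReal_cpow (by linarith), ← Complex.ofReal_div, ← Complex.ofReal_sub]

lemma I_mul_cpow {t : ℝ} (ht : 0 < t) (a : ℝ) :
    ((t : ℂ) * Complex.I) ^ (a : ℂ) =
      Complex.exp (Complex.I * Real.pi * a / 2) * (t : ℂ) ^ (a : ℂ) := by
  have ht' : (t : ℂ) ≠ 0 := by exact_mod_cast ht.ne'
  rw [Complex.cpow_def_of_ne_zero (mul_ne_zero ht' Complex.I_ne_zero),
    Complex.log_ofReal_mul ht Complex.I_ne_zero, Complex.log_I,
    Complex.cpow_def_of_ne_zero ht', ← Complex.exp_add, Complex.ofReal_log ht.le]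
  congr 1; ring

lemma dagumF_I (lam δ : ℝ) {t : ℝ} (ht : 0 < t) :
    dagumF lam δ ((t : ℂ) * Complex.I) = dagumRot lam δ t := by
  unfold dagumF dagumRot
  rw [I_mul_cpow ht, I_mul_cpow ht, Complex.ofReal_mul]

/-- The contour integrand. -/
noncomputable def dagumG (lam δ z : ℝ) (w : ℂ) : ℂ :=
  w * Complex.exp (Complex.I * z * w) * dagumF lam δ w

lemma dagumG_cont {δ lam : ℝ} (z : ℝ) (hδ1 : 1 < δ) (hδ2 : δ < 2) (hdl0 : 0 < δ * lam) {w : ℂ}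
    (h1 : 0 ≤ w.re) (h2 : 0 ≤ w.im) : ContinuousAt (dagumG lam δ z) w := by
  unfold dagumG
  exact ContinuousAt.mul (by fun_prop) (dagumF_cont hδ1 hδ2 hdl0 h1 h2)

lemma dagumG_norm (lam δ z : ℝ) (w : ℂ) :
    ‖dagumG lam δ z w‖ = ‖w‖ * Real.exp (-z * w.im) * ‖dagumF lam δ w‖ := by
  unfold dagumG
  rw [norm_mul, norm_mul, Complex.norm_exp]
  simp

lemma dagumG_bound {δ : ℝ} (lam z : ℝ) (hδ1 : 1 < δ) (hδ2 : δ < 2) :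
    ∃ C R : ℝ, 0 < C ∧ 1 ≤ R ∧ ∀ T : ℝ, R ≤ T → ∀ w : ℂ, 0 ≤ w.re → 0 ≤ w.im → T ≤ ‖w‖ →
      ‖dagumG lam δ z w‖ ≤ C * T ^ (1 - δ) * Real.exp (-z * w.im) := by
  obtain ⟨C, R, hC, hR, h⟩ := dagumF_bound lam hδ1 hδ2
  refine ⟨C, R, hC, hR, fun T hT w h1 h2 h3 => ?_⟩
  rw [dagumG_norm]
  have hw : 0 < ‖w‖ := by linarith
  have hb := h w h1 h2 (hT.trans h3)
  have hp : ‖w‖ * ‖w‖ ^ (-δ) = ‖w‖ ^ (1 - δ) := by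
    rw [sub_eq_add_neg, Real.rpow_add hw, Real.rpow_one]
  have hm : ‖w‖ ^ (1 - δ) ≤ T ^ (1 - δ) :=
    Real.rpow_le_rpow_of_nonpos (by linarith) h3 (by linarith)
  calc ‖w‖ * Real.exp (-z * w.im) * ‖dagumF lam δ w‖
      ≤ ‖w‖ * Real.exp (-z * w.im) * (C * ‖w‖ ^ (-δ)) := by gcongr
    _ = C * (‖w‖ * ‖w‖ ^ (-δ)) * Real.exp (-z * w.im) := by ring
    _ ≤ _ := by rw [hp]; gcongr

lemma dagum_rect {δ lam : ℝ} (z : ℝ) (hδ1 : 1 < δ) (hδ2 : δ < 2) (hdl0 : 0 < δ * lam)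
    {T : ℝ} (hT : 0 < T) :
    (∫ x in (0 : ℝ)..T, dagumG lam δ z x) =
      Complex.I * (∫ y in (0 : ℝ)..T, dagumG lam δ z (y * Complex.I)) +
      ((∫ x in (0 : ℝ)..T, dagumG lam δ z (x + T * Complex.I)) -
      Complex.I * (∫ y in (0 : ℝ)..T, dagumG lam δ z (T + y * Complex.I))) := by
  have := Complex.integral_boundary_rect_eq_zero_of_continuousOn_of_differentiableOn
    (dagumG lam δ z) 0 (T + T * Complex.I) ?_ ?_
  · simp at this
    linear_combination this
  · intro w hw
    simp [Complex.mem_reProdIm, uIcc_of_le hT.le] at hw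
    exact (dagumG_cont z hδ1 hδ2 hdl0 hw.1.1 hw.2.1).continuousWithinAt
  · intro w hw
    simp [Complex.mem_reProdIm, hT.le] at hw
    refine DifferentiableAt.differentiableWithinAt ?_
    unfold dagumG
    exact DifferentiableAt.mul (by fun_prop) (dagumF_diff hδ1 hδ2 hw.1.1 hw.2.1)

lemma dagum_err {δ : ℝ} (lam : ℝ) {z : ℝ} (hz : 0 < z) (hδ1 : 1 < δ) (hδ2 : δ < 2) :
    Tendsto (fun T : ℝ => (∫ x in (0 : ℝ)..T, dagumG lam δ z (x + T * Complex.I)) -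
      Complex.I * (∫ y in (0 : ℝ)..T, dagumG lam δ z (T + y * Complex.I))) atTop (nhds 0) := by
  obtain ⟨C, R, hC, hR, h⟩ := dagumG_bound lam z hδ1 hδ2
  have hpow : Tendsto (fun T : ℝ => T ^ (1 - δ)) atTop (nhds 0) := by
    have := tendsto_rpow_neg_atTop (y := δ - 1) (by linarith)
    simpa using this
  have hexp : Tendsto (fun T : ℝ => T * Real.exp (-z * T)) atTop (nhds 0) := by
    have := tendsto_rpow_mul_exp_neg_mul_atTop_nhds_zero 1 z hz
    simpa using this
  have t1 : Tendsto (fun T : ℝ => ∫ x in (0 : ℝ)..T, dagumG lam δ z (x + T * Complex.I))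
      atTop (nhds 0) := by
    refine squeeze_zero_norm' (a := fun T => C * T ^ (1 - δ) * (T * Real.exp (-z * T))) ?_
      (by simpa using (hpow.const_mul C).mul hexp)
    filter_upwards [eventually_ge_atTop R] with T hT
    have hT0 : 0 < T := by linarith
    have := intervalIntegral.norm_integral_le_of_norm_le_const
      (a := 0) (b := T) (f := fun x : ℝ => dagumG lam δ z (x + T * Complex.I))
      (C := C * T ^ (1 - δ) * Real.exp (-z * T)) ?_
    · rw [sub_zero, abs_of_pos hT0] at this
      linarith
    · intro x hx
      rw [uIoc_of_le hT0.le] at hx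
      have hb := h T hT (x + T * Complex.I) (by simpa using hx.1.le) (by simpa using hT0.le) (by
        have := Complex.abs_im_le_norm ((x : ℂ) + T * Complex.I)
        simp at this
        exact (le_abs_self T).trans this)
      simpa using hb
  have t2 : Tendsto (fun T : ℝ => ∫ y in (0 : ℝ)..T, dagumG lam δ z (T + y * Complex.I))
      atTop (nhds 0) := by
    refine squeeze_zero_norm' (a := fun T => C * T ^ (1 - δ) * (1 / z)) ?_
      (by simpa using (hpow.const_mul C).mul_const (1 / z))
    filter_upwards [eventually_ge_atTop R] with T hT
    have hT0 : 0 < T := by linarith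
    have := intervalIntegral.norm_integral_le_of_norm_le (μ := volume)
      (a := 0) (b := T) (f := fun y : ℝ => dagumG lam δ z (T + y * Complex.I))
      (g := fun y => C * T ^ (1 - δ) * Real.exp (-z * y)) hT0.le ?_
      (Continuous.intervalIntegrable (by fun_prop) _ _)
    · refine this.trans ?_
      rw [intervalIntegral.integral_const_mul]
      have hT1 : 0 < T ^ (1 - δ) := Real.rpow_pos_of_pos hT0 _
      gcongr
      rw [intervalIntegral.integral_comp_mul_left (fun x => Real.exp x) (by linarith : -z ≠ 0),
        integral_exp, smul_eq_mul, mul_zero, Real.exp_zero, inv_neg, one_div]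
      have := Real.exp_pos (-z * T)
      have hz' : 0 < z⁻¹ := inv_pos.2 hz
      nlinarith
    · refine Eventually.of_forall fun y hy => ?_
      have hb := h T hT (T + y * Complex.I) (by simpa using hT0.le) (by simpa using hy.1.le) (by
        have := Complex.abs_re_le_norm ((T : ℂ) + y * Complex.I)
        simp at this
        exact (le_abs_self T).trans this)
      simpa using hb
  simpa using t1.sub (t2.const_mul Complex.I)

lemma dagumG_I (lam δ z : ℝ) {t : ℝ} (ht : 0 < t) :
    dagumG lam δ z (t * Complex.I) =
      Complex.I * (Complex.exp (-(z * t)) * (t : ℂ) * dagumRot lam δ t) := by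
  unfold dagumG
  rw [dagumF_I lam δ ht]
  have : Complex.I * z * (t * Complex.I) = -(z * t) := by
    linear_combination (z * t : ℂ) * Complex.I_mul_I
  rw [this]; ring

lemma dagumG_int {δ lam : ℝ} {z : ℝ} (hz : 0 < z) (hδ1 : 1 < δ) (hδ2 : δ < 2)
    (hdl0 : 0 < δ * lam) :
    IntegrableOn (fun t : ℝ => dagumG lam δ z (t * Complex.I)) (Ioi 0) := by
  have hc : ContinuousOn (fun t : ℝ => dagumG lam δ z (t * Complex.I)) (Ici 0) := by
    intro t ht
    have := dagumG_cont z hδ1 hδ2 hdl0 (w := t * Complex.I) (by simp) (by simpa using ht)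
    exact (ContinuousAt.comp (f := fun t : ℝ => (t : ℂ) * Complex.I) this
      (by fun_prop)).continuousWithinAt
  refine (integrable_norm_iff
    ((hc.mono Ioi_subset_Ici_self).aestronglyMeasurable measurableSet_Ioi)).1 ?_
  refine integrable_of_isBigO_exp_neg hz hc.norm ?_
  · obtain ⟨C, R, hC, hR, h⟩ := dagumG_bound lam z hδ1 hδ2
    refine Asymptotics.IsBigO.of_bound (C * R ^ (1 - δ)) ?_
    filter_upwards [eventually_ge_atTop R] with t ht
    have := h R le_rfl (t * Complex.I) (by simp) (by simp; linarith)
      (by simp; exact ht.trans (le_abs_self t))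
    simpa using this

/-- For `d = 3`, `δ ∈ (1,2)`, `λ > 0` with `δλ ∈ (0,2)` and `z > 0`, the improper radial
Fourier transform `(1/(2π²z)) lim_{T→∞} ∫₀^T r sin(zr) D_{λ,δ}(r) dr` exists and equals
`-(1/(2π²z)) Im ∫₀^∞ e^{-zt} t (1 - e^{iπδλ/2} t^{δλ}/(1+e^{iπδ/2} t^δ)^λ) dt`. -/
theorem dagum_spectral_density_dim_three (δ lam : ℝ) (hδ1 : 1 < δ) (hδ2 : δ < 2)
    (hlam : 0 < lam) (hdl0 : 0 < δ * lam) (hdl2 : δ * lam < 2) (z : ℝ) (hz : 0 < z) :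
    Tendsto (fun T : ℝ =>
        (1 / (2 * Real.pi ^ 2 * z)) * ∫ r in (0 : ℝ)..T, r * Real.sin (z * r) * dagum lam δ r)
      atTop
      (nhds (-(1 / (2 * Real.pi ^ 2 * z)) *
        (∫ t in Ioi (0 : ℝ), Complex.exp (-(z * t)) * (t : ℂ) * dagumRot lam δ t).im)) := by
  set J : ℂ := ∫ t in Ioi (0 : ℝ), Complex.exp (-(z * t)) * (t : ℂ) * dagumRot lam δ t with hJ
  have hI : ∫ t in Ioi (0 : ℝ), dagumG lam δ z (t * Complex.I) = Complex.I * J := by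
    rw [hJ, ← MeasureTheory.integral_const_mul]
    exact setIntegral_congr_fun measurableSet_Ioi fun t ht => dagumG_I lam δ z ht
  have hlim : Tendsto (fun T : ℝ => ∫ x in (0 : ℝ)..T, dagumG lam δ z x) atTop (nhds (-J)) := by
    have h1 := intervalIntegral_tendsto_integral_Ioi 0 (dagumG_int hz hδ1 hδ2 hdl0) tendsto_id
    rw [hI] at h1
    have h2 := (h1.const_mul Complex.I).add (dagum_err lam hz hδ1 hδ2)
    have h3 : Complex.I * (Complex.I * J) + 0 = -J := by
      linear_combination J * Complex.I_mul_I
    rw [h3] at h2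
    refine h2.congr' ?_
    filter_upwards [eventually_gt_atTop 0] with T hT
    exact (dagum_rect z hδ1 hδ2 hdl0 hT).symm
  have him := (Complex.continuous_im.tendsto _).comp hlim
  have h4 := him.const_mul (1 / (2 * Real.pi ^ 2 * z))
  rw [Complex.neg_im, mul_neg, ← neg_mul] at h4
  refine h4.congr' ?_
  filter_upwards [eventually_gt_atTop 0] with T hT
  congr 1
  have hint : IntervalIntegrable (fun x : ℝ => dagumG lam δ z x) volume 0 T := by
    refine ContinuousOn.intervalIntegrable fun x hx => ?_
    rw [uIcc_of_le hT.le] at hx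
    have := dagumG_cont z hδ1 hδ2 hdl0 (w := x) (by simpa using hx.1) (by simp)
    exact (ContinuousAt.comp (f := fun t : ℝ => (t : ℂ)) this (by fun_prop)).continuousWithinAt
  have h5 := Complex.imCLM.intervalIntegral_comp_comm hint
  simp only [Complex.imCLM_apply] at h5
  simp only [Function.comp]
  rw [← h5]
  refine intervalIntegral.integral_congr fun x hx => ?_
  rw [uIcc_of_le hT.le] at hx
  have he : Complex.I * z * x = ((z * x : ℝ) : ℂ) * Complex.I := by push_cast; ring
  simp only [dagumG]
  rw [dagumF_ofReal lam δ hx.1, Complex.im_mul_ofReal, Complex.im_ofReal_mul, he,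
    Complex.exp_ofReal_mul_I_im]
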